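/- Let c > 0 with 1/c an integer, let ℓ, s, t > 0 be integers, let d > 0, and let ε > 0 satisfy (2 + 1/c)^{(t+1)(ℓ+t)}·ε < d/3. Let G be an ε-sparse (ε|G|^{1−c}, ε|G|)-coherent graph. For i = 1, 2 let L_i be a levelling in G of height s, t respectively, with heart H_i, apex a_i, base B_i, such that |B_i| ≥ d|G| for i = 1, 2; V(L_1) ∩ V(L_2) = ({a_1} ∩ {a_2}) ∪ (B_1 ∩ B_2); and every edge between H_1 and V(L_2) has one end in the penultimate level of L_1 and the other in B_2. Then there is an induced path (or cycle if a_1 = a_2) of length ℓ + s + t between a_1 and a_2 with vertex set contained in H_1 ∪ B_1 ∪ H_2 ∪ B_2. -/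

import Mathlib

/-- (L 0, ..., L k) is a levelling in G: the sets are pairwise disjoint, |L 0| = 1,
each L (i-1) covers L i, and L 0 ∪ ... ∪ L (i-2) is anticomplete to L i. -/
def IsLevelling {V : Type} (G : SimpleGraph V) (L : ℕ → Finset V) (k : ℕ) : Prop :=
  1 ≤ k ∧ (L 0).card = 1 ∧
  (∀ i j, i < j → j ≤ k → Disjoint (L i) (L j)) ∧
  (∀ i, 1 ≤ i → i ≤ k → ∀ v ∈ L i, ∃ u ∈ L (i - 1), G.Adj u v) ∧
  (∀ i, 2 ≤ i → i ≤ k → ∀ j, j ≤ i - 2 → ∀ u ∈ L j, ∀ v ∈ L i, ¬ G.Adj u v)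

/-!
Call the union of all levels but the last one the heart. Sort the vertices of the first base by the
first level of the second levelling that has a neighbour there. A popular level `M k`, together with
the vertices sorted into it, replaces the second levelling (unless `M k` is its penultimate level,
when nothing is cut off). From then on both hearts see the two bases only through their last levels
`C₁` and `C₂`.

Such a configuration is lengthened by one: sparsity and a pigeonhole argument give subsets of `C₁`
and `C₂` such that a linear number of base vertices, `X`, is seen only from `C₂`, while at least
`ε |G| ^ (1 - c)` of them, `Y`, are seen only from `C₁`. By coherence `Y` covers most of `X`, so `Y`
is a new level on the left and the bases become `X` and its part covered by `Y`. After one step for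
each unit of `ℓ` and each level that was cut off, a common vertex of the bases closes the path.
-/

open Finset

section Covers

variable {V : Type*} {G : SimpleGraph V}

/-- `A` covers `B`: every vertex of `B` has a neighbour in `A`. -/
def Covers (G : SimpleGraph V) (A B : Finset V) : Prop :=
  ∀ b ∈ B, ∃ a ∈ A, G.Adj a b

/-- `P` and `Q` are disjoint and anticomplete to each other. -/
def Separated (G : SimpleGraph V) (P Q : Finset V) : Prop :=
  ∀ u ∈ P, ∀ v ∈ Q, u ≠ v ∧ ¬G.Adj u v

open Classical in
/-- The part of `B` covered by `A`. -/
noncomputable def covered (G : SimpleGraph V) (A B : Finset V) : Finset V :=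
  {b ∈ B | ∃ a ∈ A, G.Adj a b}

open Classical in
/-- The part of `B` covered by `A` and anticomplete to `C`. -/
noncomputable def exclusive (G : SimpleGraph V) (A C B : Finset V) : Finset V :=
  {b ∈ B | (∃ a ∈ A, G.Adj a b) ∧ ∀ c ∈ C, ¬G.Adj c b}

theorem mem_covered {A B : Finset V} {b : V} :
    b ∈ covered G A B ↔ b ∈ B ∧ ∃ a ∈ A, G.Adj a b := by
  simp [covered]

theorem mem_exclusive {A C B : Finset V} {b : V} :
    b ∈ exclusive G A C B ↔ b ∈ B ∧ (∃ a ∈ A, G.Adj a b) ∧ ∀ c ∈ C, ¬G.Adj c b := by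
  simp [exclusive]

theorem Covers.mono {A A' B B' : Finset V} (h : Covers G A B) (hA : A ⊆ A') (hB : B' ⊆ B) :
    Covers G A' B' := fun b hb ↦
  let ⟨a, ha, hab⟩ := h b (hB hb)
  ⟨a, hA ha, hab⟩

theorem Separated.mono {P P' Q Q' : Finset V} (h : Separated G P Q) (hP : P' ⊆ P) (hQ : Q' ⊆ Q) :
    Separated G P' Q' :=
  fun u hu v hv ↦ h u (hP hu) v (hQ hv)

theorem Separated.symm {P Q : Finset V} (h : Separated G P Q) : Separated G Q P :=
  fun u hu v hv ↦ ⟨(h v hv u hu).1.symm, fun huv ↦ (h v hv u hu).2 huv.symm⟩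

theorem separated_union_left [DecidableEq V] {P P' Q : Finset V} :
    Separated G (P ∪ P') Q ↔ Separated G P Q ∧ Separated G P' Q :=
  forall_mem_union

theorem separated_union_right [DecidableEq V] {P Q Q' : Finset V} :
    Separated G P (Q ∪ Q') ↔ Separated G P Q ∧ Separated G P Q' := by
  simp only [Separated, forall_mem_union, forall₂_and]

theorem Covers.separated {C P Y : Finset V} (hCY : Covers G C Y) (hCP : Separated G C P)
    (hPY : ∀ v ∈ P, ∀ y ∈ Y, ¬G.Adj v y) : Separated G P Y := by
  intro v hv y hy
  obtain ⟨c, hc, hcy⟩ := hCY y hy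
  exact ⟨fun hvy ↦ (hCP c hc v hv).2 (hvy ▸ hcy), hPY v hv y hy⟩

theorem covered_subset (A B : Finset V) : covered G A B ⊆ B :=
  fun _ hb ↦ (mem_covered.1 hb).1

theorem covers_covered (A B : Finset V) : Covers G A (covered G A B) :=
  fun _ hb ↦ (mem_covered.1 hb).2

theorem Covers.covered_eq {A B : Finset V} (h : Covers G A B) : covered G A B = B :=
  (covered_subset A B).antisymm fun b hb ↦ mem_covered.2 ⟨hb, h b hb⟩

theorem covered_empty_left (B : Finset V) : covered G ∅ B = ∅ := by
  simp [covered]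

theorem exclusive_subset (A C B : Finset V) : exclusive G A C B ⊆ B :=
  fun _ hb ↦ (mem_exclusive.1 hb).1

theorem covers_exclusive (A C B : Finset V) : Covers G A (exclusive G A C B) :=
  fun _ hb ↦ (mem_exclusive.1 hb).2.1

theorem not_adj_of_mem_exclusive {A C B : Finset V} :
    ∀ c ∈ C, ∀ b ∈ exclusive G A C B, ¬G.Adj c b :=
  fun c hc _ hb ↦ (mem_exclusive.1 hb).2.2 c hc

theorem exclusive_mono {A C B B' : Finset V} (h : B ⊆ B') :
    exclusive G A C B ⊆ exclusive G A C B' := fun _ hb ↦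
  mem_exclusive.2 ⟨h (mem_exclusive.1 hb).1, (mem_exclusive.1 hb).2⟩

theorem covered_exclusive_subset {A B B' C S : Finset V} (h : B' ⊆ B) :
    covered G S (exclusive G C A B') ⊆ exclusive G S A B := fun _ hb ↦
  let ⟨hb', hS⟩ := mem_covered.1 hb
  let ⟨hB', _, hA⟩ := mem_exclusive.1 hb'
  mem_exclusive.2 ⟨h hB', hS, hA⟩

theorem disjoint_exclusive (A C B : Finset V) :
    Disjoint (exclusive G A C B) (exclusive G C A B) :=
  disjoint_left.2 fun b hb hb' ↦
    let ⟨a, ha, hab⟩ := covers_exclusive A C B b hb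
    not_adj_of_mem_exclusive a ha b hb' hab

theorem exclusive_eq_sdiff [DecidableEq V] (A C B : Finset V) :
    exclusive G A C B = covered G A B \ covered G C B := by
  ext b
  simp only [mem_exclusive, mem_sdiff, mem_covered, not_and, not_exists]
  tauto

theorem card_covered_sub_le_card_exclusive (A C B : Finset V) :
    (#(covered G A B) : ℝ) - #(covered G C B) ≤ #(exclusive G A C B) := by
  classical
  have := le_card_sdiff (covered G C B) (covered G A B)
  rw [exclusive_eq_sdiff, sub_le_iff_le_add]
  exact_mod_cast Nat.sub_le_iff_le_add.1 this

theorem card_exclusive_le_add (A A' C B : Finset V) :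
    #(exclusive G A A' B) ≤ #(exclusive G C A' (covered G A B)) + #(exclusive G A C B) := by
  classical
  refine (card_le_card fun b hb ↦ ?_).trans (card_union_le _ _)
  simp only [mem_union, mem_exclusive, mem_covered] at hb ⊢
  grind

theorem Covers.card_sub_le_card_exclusive {A B : Finset V} (h : Covers G A B) (C : Finset V) :
    (#B : ℝ) - #(covered G C B) ≤ #(exclusive G A C B) := by
  have := card_covered_sub_le_card_exclusive (G := G) A C B
  rwa [h.covered_eq] at this

theorem card_covered_insert_le [DecidableEq V] (a : V) (A B : Finset V) :
    #(covered G (insert a A) B) ≤ #(covered G {a} B) + #(covered G A B) := by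
  refine le_trans (card_le_card fun b hb ↦ ?_) (card_union_le _ _)
  simp only [mem_covered, mem_union, mem_insert, mem_singleton] at hb ⊢
  grind

end Covers

section AverageSubset

variable {α : Type*}

theorem exists_subset_card_eq_forall_le [DecidableEq α] {β : Type*} [LinearOrder β] (f : α → β)
    (C : Finset α) {k : ℕ} (hk : k ≤ #C) : ∃ S ⊆ C, #S = k ∧ ∀ a ∈ C \ S, ∀ b ∈ S, f a ≤ f b := by
  induction k with
  | zero => exact ⟨∅, empty_subset C, card_empty, by simp⟩
  | succ k ih =>
    obtain ⟨S, hSC, hSk, hS⟩ := ih (Nat.le_of_succ_le hk)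
    have hne : (C \ S).Nonempty := by
      rw [← card_pos, card_sdiff_of_subset hSC]
      omega
    obtain ⟨x, hx, hmax⟩ := exists_max_image (C \ S) f hne
    rw [mem_sdiff] at hx
    refine ⟨insert x S, insert_subset hx.1 hSC, by rw [card_insert_of_notMem hx.2, hSk], ?_⟩
    intro a ha b hb
    have ha' : a ∈ C \ S := sdiff_subset_sdiff le_rfl (subset_insert x S) ha
    obtain rfl | hb := mem_insert.1 hb
    · exact hmax a ha'
    · exact hS a ha' b hb

theorem exists_subset_mul_sum_le (f : α → ℕ) (C : Finset α) {k : ℕ} (hk : k ≤ #C) :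
    ∃ S ⊆ C, #S = k ∧ k * ∑ c ∈ C, f c ≤ #C * ∑ c ∈ S, f c := by
  classical
  obtain ⟨S, hSC, hSk, hS⟩ := exists_subset_card_eq_forall_le f C hk
  refine ⟨S, hSC, hSk, ?_⟩
  have hcross : #S * ∑ a ∈ C \ S, f a ≤ #(C \ S) * ∑ b ∈ S, f b :=
    calc #S * ∑ a ∈ C \ S, f a = ∑ a ∈ C \ S, ∑ _b ∈ S, f a := by
          simp only [sum_const, smul_eq_mul, mul_sum]
      _ ≤ ∑ _a ∈ C \ S, ∑ b ∈ S, f b := sum_le_sum fun a ha ↦ sum_le_sum (hS a ha)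
      _ = #(C \ S) * ∑ b ∈ S, f b := by simp only [sum_const, smul_eq_mul]
  rw [← sum_sdiff hSC, ← card_sdiff_add_card_eq_card hSC, ← hSk, mul_add, add_mul]
  exact Nat.add_le_add_right hcross _

end AverageSubset

section Splitting

variable {V : Type*} {G : SimpleGraph V}

theorem exists_subset_card_covered_mem_Icc {B : Finset V} {η τ : ℝ}
    (hdeg : ∀ v, (#(covered G {v} B) : ℝ) ≤ η) (hτ : 0 ≤ τ) (A : Finset V)
    (hA : τ - η ≤ #(covered G A B)) :
    ∃ A' ⊆ A, (#(covered G A' B) : ℝ) ∈ Set.Icc (τ - η) τ := by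
  classical
  induction A using Finset.induction with
  | empty => exact ⟨∅, Subset.rfl, hA, by simpa [covered_empty_left] using hτ⟩
  | insert a A _ ih =>
    obtain hle | hgt := le_or_gt (#(covered G (insert a A) B) : ℝ) τ
    · exact ⟨_, Subset.rfl, hA, hle⟩
    · have hinsert : (#(covered G (insert a A) B) : ℝ) ≤ #(covered G {a} B) + #(covered G A B) :=
        mod_cast card_covered_insert_le a A B
      obtain ⟨A', hA', hcard⟩ := ih (by linarith [hdeg a])
      exact ⟨A', hA'.trans (subset_insert a A), hcard⟩

theorem Covers.exists_subset_mul_card_le {C W : Finset V} (hC : Covers G C W) {k : ℕ}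
    (hk : k ≤ #C) : ∃ S ⊆ C, #S = k ∧ k * #W ≤ #C * #(covered G S W) := by
  let := Classical.decEq V
  choose! φ hφC hφadj using hC
  obtain ⟨S, hSC, hSk, hS⟩ := exists_subset_mul_sum_le (fun c ↦ #{b ∈ W | φ b = c}) C hk
  rw [sum_card_fiberwise_eq_card_filter, sum_card_fiberwise_eq_card_filter,
    filter_true_of_mem hφC] at hS
  refine ⟨S, hSC, hSk, hS.trans (Nat.mul_le_mul_left _ (card_le_card fun b hb ↦ ?_))⟩
  rw [mem_filter] at hb
  exact mem_covered.2 ⟨hb.1, φ b, hb.2, hφadj b hb.1⟩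

theorem Covers.exists_small_subset {C W : Finset V} (hC : Covers G C W) {q : ℝ} (hq : 0 < q)
    (hqW : q ≤ #W) :
    ∃ S ⊆ C, q ≤ #(covered G S W) ∧ (#S ≤ 1 ∨ (#S : ℝ) * #W < 2 * q * #C) := by
  have hW : (0 : ℝ) < #W := hq.trans_le hqW
  have hCpos : (0 : ℝ) < #C := by
    obtain ⟨b, hb⟩ := card_pos.1 (Nat.cast_pos.1 hW)
    obtain ⟨c, hc, -⟩ := hC b hb
    exact_mod_cast card_pos.2 ⟨c, hc⟩
  have hk : ⌈(#C : ℝ) * q / #W⌉₊ ≤ #C := by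
    rw [Nat.ceil_le, div_le_iff₀ hW]
    gcongr
  obtain ⟨S, hSC, hSk, hS⟩ := hC.exists_subset_mul_card_le hk
  have hceil : (#C : ℝ) * q ≤ #S * #W := by
    rw [← div_le_iff₀ hW, hSk]
    exact Nat.le_ceil _
  have hS' : (#S : ℝ) * #W ≤ #C * #(covered G S W) := by
    rw [hSk]
    exact_mod_cast hS
  refine ⟨S, hSC, le_of_mul_le_mul_left (hceil.trans hS') hCpos, or_iff_not_imp_left.2 fun hS1 ↦ ?_⟩
  have hS2 : (2 : ℝ) ≤ #S := mod_cast not_le.1 hS1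
  have hlt : (#S : ℝ) < #C * q / #W + 1 := hSk ▸ Nat.ceil_lt_add_one (by positivity)
  have : ((#S : ℝ) - 1) * #W < #C * q := by
    rw [← lt_div_iff₀ hW]
    linarith
  nlinarith

theorem Covers.exists_subset_card_le {C W : Finset V} (hC : Covers G C W) :
    ∃ C₀ ⊆ C, #C₀ ≤ #W ∧ Covers G C₀ W := by
  classical
  choose! φ hφC hφadj using hC
  exact ⟨W.image φ, image_subset_iff.2 hφC, card_image_le,
    fun b hb ↦ ⟨φ b, mem_image_of_mem φ hb, hφadj b hb⟩⟩

theorem card_covered_le_of_card_le_one {B S : Finset V} {η : ℝ} (hη : 0 ≤ η)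
    (hdeg : ∀ v, (#(covered G {v} B) : ℝ) ≤ η) (hS : #S ≤ 1) : (#(covered G S B) : ℝ) ≤ η := by
  obtain h | h := Nat.le_one_iff_eq_zero_or_eq_one.1 hS
  · rw [card_eq_zero.1 h, covered_empty_left]
    simpa using hη
  · obtain ⟨v, rfl⟩ := card_eq_one.1 h
    exact hdeg v

theorem card_covered_sub_le_card_exclusive_of_card_le_one {B S : Finset V} {η : ℝ} (hη : 0 ≤ η)
    (hdeg : ∀ v, (#(covered G {v} B) : ℝ) ≤ η) (A : Finset V) (hS : #S ≤ 1) :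
    (#(covered G A B) : ℝ) - η ≤ #(exclusive G A S B) :=
  (sub_le_sub_left (card_covered_le_of_card_le_one hη hdeg hS) _).trans
    (card_covered_sub_le_card_exclusive A S B)

/- `A` covers about `j + 1` blocks of size `κ + 3 * η`. Dropping one block to reach `A' ⊆ A` frees
at least `2 * η` vertices that `C` also covers (otherwise `A` and `C` themselves will do), and a
fraction `q / η = 1 / r` of `C` covers `q` of them. -/
theorem exists_exclusive_of_card_lt_pow {B : Finset V} {η q r κ : ℝ} (hq : 0 < q) (hr : 1 ≤ r)
    (hqr : q * r = η) (hκ : 0 ≤ κ) (hdeg : ∀ v, (#(covered G {v} B) : ℝ) ≤ η) (j : ℕ)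
    (A C : Finset V) (hA : (j + 1) * (κ + 3 * η) - η ≤ #(covered G A B))
    (hCA : q ≤ #(exclusive G C A B)) (hC : (#C : ℝ) < r ^ j) :
    ∃ A' ⊆ A, ∃ C' ⊆ C, κ ≤ #(exclusive G A' C' B) ∧ q ≤ #(exclusive G C' A' B) := by
  classical
  induction j generalizing A C with
  | zero =>
    have hC0 : C = ∅ := by simpa using hC
    simp only [hC0, exclusive_eq_sdiff, covered_empty_left, empty_sdiff, card_empty,
      Nat.cast_zero] at hCA
    linarith
  | succ j ih =>
    have hqη : q ≤ η := by nlinarith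
    have hη : 0 < η := hq.trans_le hqη
    obtain hAC | hAC := le_or_gt κ #(exclusive G A C B)
    · exact ⟨A, Subset.rfl, C, Subset.rfl, hAC, hCA⟩
    push_cast at hA
    obtain ⟨A', hA', hA'lo, hA'hi⟩ := exists_subset_card_covered_mem_Icc hdeg
      (τ := (j + 1) * (κ + 3 * η)) (by positivity) A (by linarith)
    set W := exclusive G C A' (covered G A B)
    have hWcard : 2 * η ≤ #W := by
      have h₁ := card_covered_sub_le_card_exclusive (G := G) A A' B
      have h₂ : (#(exclusive G A A' B) : ℝ) ≤ #W + #(exclusive G A C B) :=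
        mod_cast card_exclusive_le_add A A' C B
      linarith
    obtain ⟨S, hSC, hqS, hS⟩ :=
      (covers_exclusive C A' (covered G A B)).exists_small_subset hq (by linarith)
    have hSA' : q ≤ #(exclusive G S A' B) :=
      hqS.trans (mod_cast card_le_card (covered_exclusive_subset (covered_subset A B)))
    obtain hS1 | hS2 := hS
    · refine ⟨A', hA', S, hSC, ?_, hSA'⟩
      have := card_covered_sub_le_card_exclusive_of_card_le_one hη.le hdeg A' hS1
      nlinarith [mul_nonneg j.cast_nonneg (by positivity : 0 ≤ κ + 3 * η)]
    · have hScard : (#S : ℝ) < r ^ j := by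
        have h₁ : (#S : ℝ) * (2 * η) ≤ #S * #W := by gcongr
        have h₂ : 2 * q * #C < 2 * η * r ^ j :=
          calc 2 * q * #C < 2 * q * r ^ (j + 1) := by gcongr
            _ = 2 * η * r ^ j := by rw [← hqr]; ring
        nlinarith
      obtain ⟨A'', hA'', C', hC', h⟩ := ih A' S hA'lo hSA' hScard
      exact ⟨A'', hA''.trans hA', C', hC'.trans hSC, h⟩

theorem exists_exclusive_of_covers {A B C : Finset V} {η q r κ : ℝ} {m : ℕ} (hq : 0 < q)
    (hr : 1 ≤ r) (hqr : q * r = η) (hqm : 2 * q ≤ r ^ m) (hκ : 0 ≤ κ)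
    (hdeg : ∀ v, (#(covered G {v} B) : ℝ) ≤ η) (hA : Covers G A B) (hC : Covers G C B)
    (hB : (m + 2) * (κ + 3 * η) ≤ #B) :
    ∃ A' ⊆ A, ∃ C' ⊆ C, κ ≤ #(exclusive G A' C' B) ∧ q ≤ #(exclusive G C' A' B) := by
  have hqη : q ≤ η := by nlinarith
  have hη : 0 < η := hq.trans_le hqη
  have hμ : 0 ≤ κ + 3 * η := by positivity
  obtain ⟨A', hA', hA'lo, hA'hi⟩ := exists_subset_card_covered_mem_Icc hdeg
    (τ := (m + 1) * (κ + 3 * η)) (by positivity) A (by rw [hA.covered_eq]; linarith)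
  set W := exclusive G C A' B
  have hqW : q ≤ #W := by linarith [hC.card_sub_le_card_exclusive A']
  obtain ⟨C₀, hC₀C, hC₀W, hC₀⟩ := (covers_exclusive (G := G) C A' B).exists_subset_card_le
  obtain ⟨S, hSC₀, hqS, hS⟩ := hC₀.exists_small_subset hq hqW
  have hSA' : q ≤ #(exclusive G S A' B) :=
    hqS.trans (mod_cast card_le_card (covered_exclusive_subset Subset.rfl))
  obtain hS1 | hS2 := hS
  · refine ⟨A', hA', S, hSC₀.trans hC₀C, ?_, hSA'⟩
    have := card_covered_sub_le_card_exclusive_of_card_le_one hη.le hdeg A' hS1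
    nlinarith [mul_nonneg m.cast_nonneg hμ]
  · have hScard : (#S : ℝ) < 2 * q := by
      have h₁ : (#C₀ : ℝ) ≤ #W := mod_cast hC₀W
      have h₂ : (0 : ℝ) < #W := hq.trans_le hqW
      have h₃ : 2 * q * #C₀ ≤ 2 * q * #W := by gcongr
      exact lt_of_mul_lt_mul_right (hS2.trans_le h₃) h₂.le
    obtain ⟨A'', hA'', C', hC', h⟩ := exists_exclusive_of_card_lt_pow hq hr hqr hκ hdeg m A' S
      hA'lo hSA' (hScard.trans_le hqm)
    exact ⟨A'', hA''.trans hA', C', hC'.trans (hSC₀.trans hC₀C), h⟩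

theorem exists_exclusive_union_of_covers [DecidableEq V] {A B₁ B₂ C : Finset V} {η q r κ : ℝ}
    {m : ℕ} (hq : 0 < q) (hr : 1 ≤ r) (hqr : q * r = η) (hqm : 2 * q ≤ r ^ m) (hκ : 0 ≤ κ)
    (hdeg : ∀ v B, (#(covered G {v} B) : ℝ) ≤ η) (hC : Covers G C B₁) (hA : Covers G A B₂)
    (hB₁ : 2 * ((m + 2) * (κ + 3 * η)) ≤ #B₁) (hB₂ : 2 * ((m + 2) * (κ + 3 * η)) ≤ #B₂) :
    ∃ A' ⊆ A, ∃ C' ⊆ C, κ ≤ #(exclusive G A' C' (B₁ ∪ B₂)) ∧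
      q ≤ #(exclusive G C' A' (B₁ ∪ B₂)) := by
  have of_subset (B : Finset V) (hB : B ⊆ B₁ ∪ B₂) (hAB : Covers G A B) (hCB : Covers G C B)
      (hcard : (m + 2) * (κ + 3 * η) ≤ #B) : ∃ A' ⊆ A, ∃ C' ⊆ C,
        κ ≤ #(exclusive G A' C' (B₁ ∪ B₂)) ∧ q ≤ #(exclusive G C' A' (B₁ ∪ B₂)) := by
    obtain ⟨A', hA', C', hC', hκ', hq'⟩ :=
      exists_exclusive_of_covers hq hr hqr hqm hκ (hdeg · B) hAB hCB hcard
    exact ⟨A', hA', C', hC', hκ'.trans (mod_cast card_le_card (exclusive_mono hB)),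
      hq'.trans (mod_cast card_le_card (exclusive_mono hB))⟩
  obtain hAB₁ | hAB₁ := le_or_gt ((m + 2) * (κ + 3 * η)) #(covered G A B₁)
  · exact of_subset _ ((covered_subset A B₁).trans subset_union_left) (covers_covered A B₁)
      (hC.mono Subset.rfl (covered_subset A B₁)) hAB₁
  obtain hCB₂ | hCB₂ := le_or_gt ((m + 2) * (κ + 3 * η)) #(covered G C B₂)
  · exact of_subset _ ((covered_subset C B₂).trans subset_union_right)
      (hA.mono Subset.rfl (covered_subset C B₂)) (covers_covered C B₂) hCB₂
  have hX : (#(exclusive G A C B₂) : ℝ) ≤ #(exclusive G A C (B₁ ∪ B₂)) :=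
    mod_cast card_le_card (exclusive_mono subset_union_right)
  have hY : (#(exclusive G C A B₁) : ℝ) ≤ #(exclusive G C A (B₁ ∪ B₂)) :=
    mod_cast card_le_card (exclusive_mono subset_union_left)
  have hqη : q ≤ η := by nlinarith
  have hblock : κ + 3 * η ≤ (m + 2) * (κ + 3 * η) :=
    le_mul_of_one_le_left (by linarith) (by linarith [(m.cast_nonneg : (0 : ℝ) ≤ m)])
  refine ⟨A, Subset.rfl, C, Subset.rfl, ?_, ?_⟩
  · linarith [hA.card_sub_le_card_exclusive C]
  · linarith [hC.card_sub_le_card_exclusive A]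

end Splitting

section InducedPaths

open SimpleGraph

variable {V : Type*} {G : SimpleGraph V} {a u v w : V}

/-- `p` is an induced path. -/
def IsInducedPath (p : G.Walk u v) : Prop :=
  p.IsPath ∧ p.IsChordless

theorem IsInducedPath.reverse {p : G.Walk u v} (hp : IsInducedPath p) :
    IsInducedPath p.reverse := by
  refine ⟨hp.1.reverse, Walk.isChordless_iff_forall_mem_edges.2 ?_⟩
  intro x y hx hy hxy
  rw [Walk.support_reverse, List.mem_reverse] at hx hy
  simpa using hp.2.mem_edges hx hy hxy

theorem IsInducedPath.append {p : G.Walk u v} {q : G.Walk v w} (hp : IsInducedPath p)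
    (hq : IsInducedPath q)
    (hpq : ∀ x ∈ p.support, x ≠ v → ∀ y ∈ q.support, y ≠ v → x ≠ y ∧ ¬G.Adj x y) :
    IsInducedPath (p.append q) := by
  have hqv : v ∉ q.support.tail := by
    have := hq.1.support_nodup
    rw [← q.cons_tail_support] at this
    exact (List.nodup_cons.1 this).1
  have mem_edges {x y : V} (hx : x ∈ p.support) (hy : y ∈ q.support) (hxy : G.Adj x y) :
      s(x, y) ∈ (p.append q).edges := by
    rw [Walk.edges_append, List.mem_append]
    obtain rfl | hxv := eq_or_ne x v
    · exact .inr (hq.2.mem_edges q.start_mem_support hy hxy)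
    obtain rfl | hyv := eq_or_ne y v
    · exact .inl (hp.2.mem_edges hx p.end_mem_support hxy)
    exact absurd hxy (hpq x hx hxv y hy hyv).2
  refine ⟨?_, Walk.isChordless_iff_forall_mem_edges.2 ?_⟩
  · rw [Walk.isPath_def, Walk.support_append, List.nodup_append]
    refine ⟨hp.1.support_nodup, hq.1.support_nodup.tail, fun x hx y hy hxy ↦ ?_⟩
    have hyv : y ≠ v := fun h ↦ hqv (h ▸ hy)
    exact (hpq x hx (hxy ▸ hyv) y (List.mem_of_mem_tail hy) hyv).1 hxy
  · intro x y hx hy hxy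
    rw [Walk.mem_support_append_iff] at hx hy
    obtain hx | hx := hx <;> obtain hy | hy := hy
    · simp [hp.2.mem_edges hx hy hxy]
    · exact mem_edges hx hy hxy
    · rw [Sym2.eq_swap]
      exact mem_edges hy hx hxy.symm
    · simp [hq.2.mem_edges hx hy hxy]

/-- Every vertex of `C` is joined to `a` by an induced path of length `n` whose other vertices lie
in `H`. The pair `(H, C)` retains what the pathfinder needs of the levels of a levelling. -/
def ReachedThrough (G : SimpleGraph V) (a : V) (n : ℕ) (H C : Finset V) : Prop :=
  ∀ c ∈ C, ∃ p : G.Walk a c, IsInducedPath p ∧ p.length = n ∧ ∀ x ∈ p.support, x ≠ c → x ∈ H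

theorem reachedThrough_zero (a : V) : ReachedThrough G a 0 ∅ {a} := by
  intro c hc
  obtain rfl := mem_singleton.1 hc
  refine ⟨.nil, ⟨.nil, Walk.isChordless_iff_forall_mem_edges.2 ?_⟩, rfl, ?_⟩ <;> simp

theorem ReachedThrough.mono {H C C' : Finset V} {n : ℕ} (h : ReachedThrough G a n H C)
    (hC : C' ⊆ C) : ReachedThrough G a n H C' :=
  fun c hc ↦ h c (hC hc)

theorem ReachedThrough.succ [DecidableEq V] {H C Y : Finset V} {n : ℕ}
    (h : ReachedThrough G a n H C) (hCY : Covers G C Y) (hHY : Separated G H Y) :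
    ReachedThrough G a (n + 1) (H ∪ C) Y := by
  intro y hy
  obtain ⟨c, hc, hcy⟩ := hCY y hy
  obtain ⟨p, hp, hlen, hpH⟩ := h c hc
  refine ⟨p.append hcy.toWalk, hp.append ⟨hcy.isPath_toWalk, hcy.isChordless_toWalk⟩ ?_, ?_, ?_⟩
  · intro x hx hxc z hz hzc
    obtain rfl : z = y := by simpa [hzc] using hz
    exact hHY x (hpH x hx hxc) z hy
  · simp [hlen]
  · intro x hx hxy
    obtain rfl | hxc := eq_or_ne x c
    · exact mem_union_right _ hc
    · have hxp : x ∈ p.support := by simpa [hxc, hxy] using hx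
      exact mem_union_left _ (hpH x hxp hxc)

theorem ReachedThrough.exists_isInducedPath [DecidableEq V] {a' x : V} {n n' : ℕ}
    {H H' C C' : Finset V} (h : ReachedThrough G a n H C) (h' : ReachedThrough G a' n' H' C')
    (hHH' : Separated G H H') (hx : x ∈ C) (hx' : x ∈ C') :
    ∃ p : G.Walk a a', IsInducedPath p ∧ p.length = n + n' ∧
      ∀ y ∈ p.support, y ∈ insert x (H ∪ H') := by
  obtain ⟨p, hp, hlen, hpH⟩ := h x hx
  obtain ⟨q, hq, hlen', hqH'⟩ := h' x hx'
  refine ⟨p.append q.reverse, hp.append hq.reverse ?_, by simp [hlen, hlen'], fun y hy ↦ ?_⟩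
  · intro y hy hyx z hz hzx
    rw [Walk.support_reverse, List.mem_reverse] at hz
    exact hHH' y (hpH y hy hyx) z (hqH' z hz hzx)
  · rw [Walk.mem_support_append_iff, Walk.support_reverse,
      List.mem_reverse] at hy
    rw [mem_insert, mem_union]
    grind

end InducedPaths

section LinkedPairs

variable {V : Type*} {G : SimpleGraph V}

/-- `G` is sparse and coherent: no vertex has more than `η` neighbours in a finite set, and there is
no disjoint anticomplete pair of finite sets of sizes at least `q` and `η`. -/
structure SparseCoherent (G : SimpleGraph V) (q η : ℝ) : Prop where
  card_covered_singleton_le : ∀ v B, (#(covered G {v} B) : ℝ) ≤ η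
  exists_adj : ∀ Y X, Disjoint Y X → q ≤ #Y → η ≤ #X → ∃ y ∈ Y, ∃ x ∈ X, G.Adj y x

theorem SparseCoherent.card_sub_lt_card_covered {q η : ℝ} (hG : SparseCoherent G q η)
    {X Y : Finset V} (hYX : Disjoint Y X) (hY : q ≤ #Y) : (#X : ℝ) - η < #(covered G Y X) := by
  classical
  by_contra! hle
  have hcard := card_sdiff_add_card_eq_card (covered_subset (G := G) Y X)
  have hη : η ≤ #(X \ covered G Y X) := by
    have : (#(X \ covered G Y X) : ℝ) + #(covered G Y X) = #X := mod_cast hcard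
    linarith
  obtain ⟨y, hy, x, hx, hyx⟩ := hG.exists_adj Y _ (hYX.mono_right sdiff_subset) hY hη
  rw [mem_sdiff] at hx
  exact hx.2 (mem_covered.2 ⟨hx.1, y, hy, hyx⟩)

/-- The state of the pathfinder. For `i = 1, 2` the vertices of `Cᵢ` are reached from the apex `aᵢ`
through `Hᵢ`, and `Cᵢ` covers the base `Bᵢ`. The hearts `Hᵢ ∪ Cᵢ` are separated, and the `Hᵢ` are
separated from both bases, so that every edge from a heart to a base leaves `C₁ ∪ C₂`. The whole
configuration lies in `W`. -/
structure LinkedPair [DecidableEq V] (G : SimpleGraph V) (W : Finset V) (a₁ : V) (s : ℕ)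
    (H₁ C₁ B₁ : Finset V) (a₂ : V) (t : ℕ) (H₂ C₂ B₂ : Finset V) : Prop where
  reached_left : ReachedThrough G a₁ s H₁ C₁
  reached_right : ReachedThrough G a₂ t H₂ C₂
  covers_left : Covers G C₁ B₁
  covers_right : Covers G C₂ B₂
  separated_hearts : Separated G (H₁ ∪ C₁) (H₂ ∪ C₂)
  separated_left : Separated G H₁ (B₁ ∪ B₂)
  separated_right : Separated G H₂ (B₁ ∪ B₂)
  hearts_subset : H₁ ∪ C₁ ∪ (H₂ ∪ C₂) ⊆ W
  bases_subset : B₁ ∪ B₂ ⊆ W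

namespace LinkedPair

variable [DecidableEq V] {W H₁ C₁ B₁ H₂ C₂ B₂ : Finset V} {a₁ a₂ : V} {s t : ℕ}

theorem exists_isInducedPath (h : LinkedPair G W a₁ s H₁ C₁ B₁ a₂ t H₂ C₂ B₂) {x : V}
    (hx₁ : x ∈ B₁) (hx₂ : x ∈ B₂) :
    ∃ p : G.Walk a₁ a₂, IsInducedPath p ∧ p.length = s + t + 2 ∧ ∀ y ∈ p.support, y ∈ W := by
  obtain ⟨p, hp, hlen, hpW⟩ :=
    (h.reached_left.succ h.covers_left (separated_union_right.1 h.separated_left).1)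
      |>.exists_isInducedPath
        (h.reached_right.succ h.covers_right (separated_union_right.1 h.separated_right).2)
        h.separated_hearts hx₁ hx₂
  refine ⟨p, hp, by omega, fun y hy ↦ ?_⟩
  obtain rfl | hy := mem_insert.1 (hpW y hy)
  · exact h.bases_subset (mem_union_left _ hx₁)
  · exact h.hearts_subset hy

theorem extend (h : LinkedPair G W a₁ s H₁ C₁ B₁ a₂ t H₂ C₂ B₂) {C₁' C₂' X Y : Finset V}
    (hC₁ : C₁' ⊆ C₁) (hC₂ : C₂' ⊆ C₂) (hX : X = exclusive G C₂' C₁' (B₁ ∪ B₂))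
    (hY : Y = exclusive G C₁' C₂' (B₁ ∪ B₂)) :
    LinkedPair G W a₁ (s + 1) (H₁ ∪ C₁') Y (covered G Y X) a₂ t H₂ C₂' X := by
  have hXB : X ⊆ B₁ ∪ B₂ := hX ▸ exclusive_subset _ _ _
  have hYB : Y ⊆ B₁ ∪ B₂ := hY ▸ exclusive_subset _ _ _
  have hXY : covered G Y X ∪ X = X := union_eq_right.2 (covered_subset Y X)
  have hCX : Covers G C₂' X := hX ▸ covers_exclusive _ _ _
  have hCY : Covers G C₁' Y := hY ▸ covers_exclusive _ _ _
  have hC : Separated G C₁' C₂' :=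
    h.separated_hearts.mono (hC₁.trans subset_union_right) (hC₂.trans subset_union_right)
  have hCX' : Separated G C₁' X := hCX.separated hC.symm (hX ▸ not_adj_of_mem_exclusive)
  have hYC : Separated G Y C₂' := (hCY.separated hC (hY ▸ not_adj_of_mem_exclusive)).symm
  have hearts_subset := h.hearts_subset
  have bases_subset := h.bases_subset
  refine ⟨(h.reached_left.mono hC₁).succ hCY (h.separated_left.mono Subset.rfl hYB),
    h.reached_right.mono hC₂, covers_covered Y X, hCX, ?_, ?_, ?_, ?_, ?_⟩
  · rw [separated_union_left, separated_union_right (P := Y)]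
    exact ⟨h.separated_hearts.mono (union_subset_union_right hC₁) (union_subset_union_right hC₂),
      (h.separated_right.mono Subset.rfl hYB).symm, hYC⟩
  · rw [hXY, separated_union_left]
    exact ⟨h.separated_left.mono Subset.rfl hXB, hCX'⟩
  · rw [hXY]
    exact h.separated_right.mono Subset.rfl hXB
  · grind
  · grind

variable {q r η : ℝ} {m : ℕ}

theorem exists_extend (h : LinkedPair G W a₁ s H₁ C₁ B₁ a₂ t H₂ C₂ B₂) (hq : 0 < q) (hr : 1 ≤ r)
    (hqr : q * r = η) (hqm : 2 * q ≤ r ^ m) (hG : SparseCoherent G q η) {δ : ℝ} (hδ : 0 ≤ δ)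
    (hB₁ : 2 * (m + 2) * (δ + 4 * η) ≤ #B₁) (hB₂ : 2 * (m + 2) * (δ + 4 * η) ≤ #B₂) :
    ∃ H₁' C₁' B₁' C₂' B₂', LinkedPair G W a₁ (s + 1) H₁' C₁' B₁' a₂ t H₂ C₂' B₂' ∧
      B₁' ⊆ B₂' ∧ δ < #B₁' := by
  have hη : 0 < η := hqr ▸ by positivity
  have hsplit : 2 * ((m + 2) * (δ + η + 3 * η)) = 2 * (m + 2) * (δ + 4 * η) := by ring
  obtain ⟨C₂', hC₂, C₁', hC₁, hX, hY⟩ := exists_exclusive_union_of_covers hq hr hqr hqm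
    (by positivity) hG.card_covered_singleton_le h.covers_left h.covers_right (hsplit ▸ hB₁)
    (hsplit ▸ hB₂)
  refine ⟨_, _, _, _, _, h.extend hC₁ hC₂ rfl rfl, covered_subset _ _, ?_⟩
  linarith [hG.card_sub_lt_card_covered (disjoint_exclusive (G := G) C₁' C₂' (B₁ ∪ B₂)) hY]

/- `δ ℓ = 6 * η * ((2 * (m + 2)) ^ ℓ - 1)` is a supersolution of the recursion
`δ (ℓ + 1) = 2 * (m + 2) * (δ ℓ + 4 * η)` that describes the loss in one extension. -/
theorem extension_bound (hη : 0 ≤ η) (m ℓ : ℕ) :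
    2 * (m + 2) * (6 * η * ((2 * (m + 2)) ^ ℓ - 1) + 4 * η) ≤
      6 * η * ((2 * (m + 2)) ^ (ℓ + 1) - 1) := by
  rw [pow_succ']
  nlinarith [mul_nonneg hη (m.cast_nonneg : (0 : ℝ) ≤ m)]

theorem extension_bound_nonneg (hη : 0 ≤ η) (m ℓ : ℕ) :
    0 ≤ 6 * η * ((2 * (m + 2)) ^ ℓ - 1) := by
  have : (1 : ℝ) ≤ (2 * (m + 2)) ^ ℓ :=
    one_le_pow₀ (by linarith [(m.cast_nonneg : (0 : ℝ) ≤ m)])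
  exact mul_nonneg (by positivity) (sub_nonneg.2 this)

theorem exists_isInducedPath_of_subset (hq : 0 < q) (hr : 1 ≤ r) (hqr : q * r = η)
    (hqm : 2 * q ≤ r ^ m) (hG : SparseCoherent G q η) (ℓ : ℕ)
    (h : LinkedPair G W a₁ s H₁ C₁ B₁ a₂ t H₂ C₂ B₂) (hB : B₁ ⊆ B₂)
    (hcard : 6 * η * ((2 * (m + 2)) ^ ℓ - 1) < #B₁) :
    ∃ p : G.Walk a₁ a₂, IsInducedPath p ∧ p.length = ℓ + s + t + 2 ∧ ∀ y ∈ p.support, y ∈ W := by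
  have hη : 0 ≤ η := hqr ▸ by positivity
  induction ℓ generalizing s H₁ C₁ B₁ C₂ B₂ with
  | zero =>
    obtain ⟨x, hx⟩ : B₁.Nonempty := by simpa [card_pos] using hcard
    simpa using h.exists_isInducedPath hx (hB hx)
  | succ ℓ ih =>
    have hB₁ := (extension_bound hη m ℓ).trans hcard.le
    obtain ⟨_, _, _, _, _, h', hB', hcard'⟩ := h.exists_extend hq hr hqr hqm hG
      (extension_bound_nonneg hη m ℓ) hB₁ (hB₁.trans (mod_cast card_le_card hB))
    obtain ⟨p, hp, hlen, hpW⟩ := ih h' hB' hcard'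
    exact ⟨p, hp, by omega, hpW⟩

theorem exists_isInducedPath_of_le_card (hq : 0 < q) (hr : 1 ≤ r) (hqr : q * r = η)
    (hqm : 2 * q ≤ r ^ m) (hG : SparseCoherent G q η) (ℓ : ℕ)
    (h : LinkedPair G W a₁ s H₁ C₁ B₁ a₂ t H₂ C₂ B₂)
    (hB₁ : 6 * η * ((2 * (m + 2)) ^ (ℓ + 1) - 1) ≤ #B₁)
    (hB₂ : 6 * η * ((2 * (m + 2)) ^ (ℓ + 1) - 1) ≤ #B₂) :
    ∃ p : G.Walk a₁ a₂, IsInducedPath p ∧ p.length = ℓ + 1 + s + t + 2 ∧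
      ∀ y ∈ p.support, y ∈ W := by
  have hη : 0 ≤ η := hqr ▸ by positivity
  have hstep := extension_bound hη m ℓ
  obtain ⟨_, _, _, _, _, h', hB', hcard⟩ := h.exists_extend hq hr hqr hqm hG
    (extension_bound_nonneg hη m ℓ) (hstep.trans hB₁) (hstep.trans hB₂)
  obtain ⟨p, hp, hlen, hpW⟩ := h'.exists_isInducedPath_of_subset hq hr hqr hqm hG ℓ hB' hcard
  exact ⟨p, hp, by omega, hpW⟩

end LinkedPair

end LinkedPairs

section Levels

variable {V : Type*} [DecidableEq V]

/-- The union of the levels of index less than `k`, which is the heart of a levelling of height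
`k`. -/
abbrev levelsBelow (L : ℕ → Finset V) (k : ℕ) : Finset V :=
  (range k).biUnion L

theorem levelsBelow_succ (L : ℕ → Finset V) (k : ℕ) :
    levelsBelow L (k + 1) = levelsBelow L k ∪ L k := by
  rw [levelsBelow, range_add_one, biUnion_insert, union_comm]

theorem subset_levelsBelow (L : ℕ → Finset V) {i k : ℕ} (hi : i < k) :
    L i ⊆ levelsBelow L k :=
  subset_biUnion_of_mem L (mem_range.2 hi)

theorem levelsBelow_mono (L : ℕ → Finset V) {k k' : ℕ} (h : k ≤ k') :
    levelsBelow L k ⊆ levelsBelow L k' :=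
  biUnion_subset_biUnion_of_subset_left L (range_mono h)

/- Sort the vertices of `B` by the first level in which they have a neighbour. -/
theorem exists_level_subset_covers (G : SimpleGraph V) (M : ℕ → Finset V) (t : ℕ) (B : Finset V) :
    ∃ k ≤ t, ∃ Z ⊆ B, #B ≤ (t + 1) * #Z ∧ (∀ u ∈ levelsBelow M k, ∀ z ∈ Z, ¬G.Adj u z) ∧
      (k < t → Covers G (M k) Z) := by
  classical
  have hex (b : V) : ∃ k, k = t ∨ ∃ u ∈ M k, G.Adj u b := ⟨t, .inl rfl⟩
  let firstLevel (b : V) : ℕ := Nat.find (hex b)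
  obtain ⟨k, hk, hcard⟩ : ∃ k ∈ range (t + 1), #B / (t + 1 : ℚ) ≤ #{b ∈ B | firstLevel b = k} := by
    refine exists_le_card_fiber_of_nsmul_le_card_of_maps_to
      (fun b _ ↦ mem_range.2 (Nat.lt_succ_of_le (Nat.find_min' (hex b) (.inl rfl)))) (by simp) ?_
    rw [card_range, nsmul_eq_mul, Nat.cast_add_one, mul_div_cancel₀ _ t.cast_add_one_ne_zero]
  refine ⟨k, Nat.le_of_lt_succ (mem_range.1 hk), {b ∈ B | firstLevel b = k}, filter_subset _ B,
    ?_, ?_, ?_⟩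
  · rw [div_le_iff₀' (by positivity)] at hcard
    exact_mod_cast hcard
  · intro u hu z hz huz
    obtain ⟨i, hi, hui⟩ := mem_biUnion.1 hu
    obtain ⟨-, rfl⟩ := mem_filter.1 hz
    exact Nat.find_min (hex z) (mem_range.1 hi) (.inr ⟨u, hui, huz⟩)
  · intro hkt z hz
    obtain ⟨-, rfl⟩ := mem_filter.1 hz
    exact (Nat.find_spec (hex z)).resolve_left hkt.ne

end Levels

section Levellings

namespace IsLevelling

variable {V : Type} {G : SimpleGraph V} {L M : ℕ → Finset V} {a a₁ a₂ : V} {i k s t : ℕ}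

theorem covers (h : IsLevelling G L k) (hi : i < k) : Covers G (L i) (L (i + 1)) :=
  h.2.2.2.1 (i + 1) i.succ_pos hi

theorem nonempty (h : IsLevelling G L k) (hbase : (L k).Nonempty) (hi : i ≤ k) :
    (L i).Nonempty := by
  induction hi using Nat.decreasingInduction with
  | self => exact hbase
  | of_succ i hi ih =>
    obtain ⟨v, hv⟩ := ih
    obtain ⟨u, hu, -⟩ := h.covers hi v hv
    exact ⟨u, hu⟩

theorem eq_one_of_subset_base (h : IsLevelling G L k) (hbase : (L k).Nonempty)
    (hsub : L 1 ⊆ L k) : k = 1 := by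
  by_contra hk
  obtain ⟨v, hv⟩ := h.nonempty hbase h.1
  exact disjoint_left.1 (h.2.2.1 1 k (lt_of_le_of_ne h.1 (Ne.symm hk)) le_rfl) hv (hsub hv)

variable [DecidableEq V]

theorem disjoint_levelsBelow (h : IsLevelling G L k) (hi : i ≤ k) :
    Disjoint (levelsBelow L i) (L i) :=
  (disjoint_biUnion_left _ _ _).2 fun j hj ↦ h.2.2.1 j i (mem_range.1 hj) hi

theorem covers_apex_base (h : IsLevelling G L k) (ha : L 0 = {a}) (hbase : (L k).Nonempty)
    (hadj : ∀ y ∈ levelsBelow L (k + 1), G.Adj a y → y ∈ L k) : Covers G {a} (L k) := by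
  have hcov : Covers G {a} (L 1) := ha ▸ h.covers h.1
  have hk : k = 1 := h.eq_one_of_subset_base hbase fun y hy ↦ by
    obtain ⟨_, hb, hy'⟩ := hcov y hy
    rw [mem_singleton.1 hb] at hy'
    exact hadj y (subset_levelsBelow L (by have := h.1; omega) hy) hy'
  exact hk ▸ hcov

theorem separated (h : IsLevelling G L k) (hi : i < k) :
    Separated G (levelsBelow L i) (L (i + 1)) := by
  intro u hu v hv
  obtain ⟨j, hj, huj⟩ := mem_biUnion.1 hu
  have hji := mem_range.1 hj
  exact ⟨fun huv ↦ disjoint_left.1 (h.2.2.1 j (i + 1) (by omega) hi) huj (huv ▸ hv),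
    h.2.2.2.2 (i + 1) (by omega) hi j (by omega) u huj v hv⟩

theorem reachedThrough (h : IsLevelling G L k) (ha : L 0 = {a}) (hi : i ≤ k) :
    ReachedThrough G a i (levelsBelow L i) (L i) := by
  induction i with
  | zero => simpa [ha, levelsBelow] using reachedThrough_zero a
  | succ i ih =>
    rw [levelsBelow_succ]
    exact (ih (Nat.le_of_succ_le hi)).succ (h.covers hi) (h.separated hi)

theorem linkedPair (hL : IsLevelling G L (s + 1)) (hM : IsLevelling G M (t + 1))
    (ha₁ : L 0 = {a₁}) (ha₂ : M 0 = {a₂})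
    (hhearts : Separated G (levelsBelow L (s + 1)) (levelsBelow M (t + 1)))
    (hbase : Separated G (levelsBelow L s) (M (t + 1))) {B₁ B₂ : Finset V} (hk : k ≤ t)
    (hB₁ : B₁ ⊆ L (s + 1)) (hB₂ : B₂ ⊆ L (s + 1) ∪ M (t + 1)) (hcov : Covers G (M k) B₂)
    (hsep : Separated G (levelsBelow M k) (B₁ ∪ B₂)) :
    LinkedPair G (levelsBelow L (s + 2) ∪ levelsBelow M (t + 2)) a₁ s (levelsBelow L s) (L s) B₁
      a₂ k (levelsBelow M k) (M k) B₂ where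
  reached_left := hL.reachedThrough ha₁ s.le_succ
  reached_right := hM.reachedThrough ha₂ (hk.trans t.le_succ)
  covers_left := (hL.covers s.lt_succ_self).mono Subset.rfl hB₁
  covers_right := hcov
  separated_hearts := by
    rw [← levelsBelow_succ, ← levelsBelow_succ]
    exact hhearts.mono Subset.rfl (levelsBelow_mono M (by omega))
  separated_left := by
    have := separated_union_right.2 ⟨hL.separated s.lt_succ_self, hbase⟩
    exact this.mono Subset.rfl (union_subset (hB₁.trans subset_union_left) hB₂)
  separated_right := hsep
  hearts_subset := by
    rw [← levelsBelow_succ, ← levelsBelow_succ]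
    exact union_subset_union (levelsBelow_mono L (by omega)) (levelsBelow_mono M (by omega))
  bases_subset := (union_subset (hB₁.trans subset_union_left) hB₂).trans <|
    union_subset_union (subset_levelsBelow L (by omega)) (subset_levelsBelow M (by omega))

/- If many vertices of `L (s + 1)` have their first neighbour in a level `M k` below the penultimate
one, then these vertices serve as both bases and the levels of `M` above `k` are dropped. -/
theorem exists_linkedPair (hL : IsLevelling G L (s + 1)) (hM : IsLevelling G M (t + 1))
    (ha₁ : L 0 = {a₁}) (ha₂ : M 0 = {a₂})
    (hhearts : Separated G (levelsBelow L (s + 1)) (levelsBelow M (t + 1)))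
    (hbase : Separated G (levelsBelow L s) (M (t + 1))) {δ : ℝ} (hδ₁ : δ ≤ #(L (s + 1)))
    (hδ₂ : δ ≤ #(M (t + 1))) :
    ∃ k ≤ t, ∃ B₁ B₂,
      LinkedPair G (levelsBelow L (s + 2) ∪ levelsBelow M (t + 2)) a₁ s (levelsBelow L s) (L s) B₁
        a₂ k (levelsBelow M k) (M k) B₂ ∧ δ ≤ (t + 1) * #B₁ ∧ δ ≤ (t + 1) * #B₂ := by
  obtain ⟨k, hkt, Z, hZ, hcard, hnadj, hcov⟩ := exists_level_subset_covers G M t (L (s + 1))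
  have hsep : Separated G (levelsBelow M k) Z := by
    refine ((hL.covers s.lt_succ_self).mono Subset.rfl hZ).separated (hhearts.mono ?_ ?_) hnadj
    · exact subset_levelsBelow L s.lt_succ_self
    · exact levelsBelow_mono M (by omega)
  refine ⟨k, hkt, Z, ?_⟩
  obtain hk | rfl := hkt.lt_or_eq
  · have h := hL.linkedPair hM ha₁ ha₂ hhearts hbase hkt hZ (hZ.trans subset_union_left) (hcov hk)
      (by rwa [union_self])
    exact ⟨Z, h, hδ₁.trans (mod_cast hcard), hδ₁.trans (mod_cast hcard)⟩
  · have h := hL.linkedPair hM ha₁ ha₂ hhearts hbase hkt hZ subset_union_right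
      (hM.covers k.lt_succ_self) (separated_union_right.2 ⟨hsep, hM.separated k.lt_succ_self⟩)
    exact ⟨_, h, hδ₁.trans (mod_cast hcard),
      hδ₂.trans (mod_cast Nat.le_mul_of_pos_left _ k.succ_pos)⟩

variable {q r η : ℝ} {m : ℕ}

theorem exists_isInducedPath (hL : IsLevelling G L (s + 1)) (hM : IsLevelling G M (t + 1))
    (ha₁ : L 0 = {a₁}) (ha₂ : M 0 = {a₂})
    (hhearts : Separated G (levelsBelow L (s + 1)) (levelsBelow M (t + 1)))
    (hbase : Separated G (levelsBelow L s) (M (t + 1))) (hq : 0 < q) (hr : 1 ≤ r)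
    (hqr : q * r = η) (hqm : 2 * q ≤ r ^ m) (hG : SparseCoherent G q η) {ℓ : ℕ} (hℓ : 0 < ℓ)
    (hB₁ : 3 * (2 * (t + 1) * (2 * (m + 2)) ^ (ℓ + t)) * η ≤ #(L (s + 1)))
    (hB₂ : 3 * (2 * (t + 1) * (2 * (m + 2)) ^ (ℓ + t)) * η ≤ #(M (t + 1))) :
    ∃ p : G.Walk a₁ a₂, IsInducedPath p ∧ p.length = ℓ + (s + 1) + (t + 1) ∧
      ∀ y ∈ p.support, y ∈ levelsBelow L (s + 2) ∪ levelsBelow M (t + 2) := by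
  obtain ⟨k, hk, B₁, B₂, h, hB₁', hB₂'⟩ :=
    hL.exists_linkedPair hM ha₁ ha₂ hhearts hbase hB₁ hB₂
  have hη : 0 < η := hqr ▸ by positivity
  have bound {x : ℝ} (hx : 3 * (2 * (t + 1) * (2 * (m + 2)) ^ (ℓ + t)) * η ≤ (t + 1) * x) :
      6 * η * ((2 * (m + 2)) ^ (ℓ - 1 + (t - k) + 1) - 1) ≤ x :=
    calc 6 * η * ((2 * (m + 2)) ^ (ℓ - 1 + (t - k) + 1) - 1)
      _ ≤ 6 * η * (2 * (m + 2)) ^ (ℓ + t) := by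
        gcongr
        refine (sub_le_self _ zero_le_one).trans (pow_le_pow_right₀ ?_ (by omega))
        linarith [(m.cast_nonneg : (0 : ℝ) ≤ m)]
      _ ≤ x := le_of_mul_le_mul_left (by linarith) (by positivity : (0 : ℝ) < t + 1)
  obtain ⟨p, hp, hlen, hpW⟩ := h.exists_isInducedPath_of_le_card hq hr hqr hqm hG
    (ℓ - 1 + (t - k)) (bound hB₁') (bound hB₂')
  exact ⟨p, hp, by omega, hpW⟩

theorem separated_hearts (hL : IsLevelling G L s) (hM : IsLevelling G M t)
    (hinter : levelsBelow L (s + 1) ∩ levelsBelow M (t + 1) = L s ∩ M t)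
    (hedge : ∀ x ∈ levelsBelow L s, ∀ y ∈ levelsBelow M (t + 1), G.Adj x y → y ∈ M t) :
    Separated G (levelsBelow L s) (levelsBelow M t) := by
  intro x hx y hy
  have hy' := levelsBelow_mono M t.le_succ hy
  refine ⟨?_, fun hxy ↦ disjoint_left.1 (hM.disjoint_levelsBelow le_rfl) hy (hedge x hx y hy' hxy)⟩
  rintro rfl
  have hxB := hinter.subset (mem_inter.2 ⟨levelsBelow_mono L s.le_succ hx, hy'⟩)
  exact disjoint_left.1 (hL.disjoint_levelsBelow le_rfl) hx (mem_inter.1 hxB).1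

theorem separated_base (hL : IsLevelling G L (s + 1))
    (hinter : levelsBelow L (s + 2) ∩ levelsBelow M (t + 1) = L (s + 1) ∩ M t)
    (hedge : ∀ x ∈ levelsBelow L (s + 1), ∀ y ∈ levelsBelow M (t + 1), G.Adj x y → x ∈ L s) :
    Separated G (levelsBelow L s) (M t) := by
  intro x hx y hy
  have hx' := levelsBelow_mono L s.le_succ hx
  have hy' := subset_levelsBelow M t.lt_succ_self hy
  refine ⟨?_, fun hxy ↦ disjoint_left.1 (hL.disjoint_levelsBelow s.le_succ) hx
    (hedge x hx' y hy' hxy)⟩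
  rintro rfl
  have hxB := hinter.subset (mem_inter.2 ⟨levelsBelow_mono L (s + 1).le_succ hx', hy'⟩)
  exact disjoint_left.1 (hL.disjoint_levelsBelow le_rfl) hx' (mem_inter.1 hxB).1

theorem apex_ne_apex (hM : IsLevelling G M t) (ha₂ : M 0 = {a₂}) (hG : SparseCoherent G q η)
    (hη : 0 ≤ η) (hB : η < #(M t)) {H : Finset V} (ha₁ : a₁ ∈ H)
    (hedge : ∀ x ∈ H, ∀ y ∈ levelsBelow M (t + 1), G.Adj x y → y ∈ M t) : a₁ ≠ a₂ := by
  rintro rfl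
  have hbase : (M t).Nonempty := card_pos.1 (Nat.cast_pos.1 (hη.trans_lt hB))
  have hle := hG.card_covered_singleton_le a₁ (M t)
  rw [(hM.covers_apex_base ha₂ hbase (hedge a₁ ha₁)).covered_eq] at hle
  exact hle.not_gt hB

end IsLevelling

end Levellings

section Parameters

theorem two_mul_succ_mul_pow_le (m ℓ t : ℕ) :
    2 * (t + 1) * (2 * (m + 2)) ^ (ℓ + t) ≤ (m + 3) ^ ((t + 2) * (ℓ + t + 1)) :=
  calc 2 * (t + 1) * (2 * (m + 2)) ^ (ℓ + t)
    _ ≤ (m + 3) ^ (t + 1) * ((m + 3) ^ 2) ^ (ℓ + t) := by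
      gcongr ?_ * ?_ ^ _
      · calc 2 * (t + 1) ≤ 2 * 2 ^ t := Nat.mul_le_mul_left 2 t.lt_two_pow_self
          _ = 2 ^ (t + 1) := (pow_succ' 2 t).symm
          _ ≤ (m + 3) ^ (t + 1) := Nat.pow_le_pow_left (by omega) _
      · nlinarith
    _ = (m + 3) ^ (t + 1 + 2 * (ℓ + t)) := by rw [← pow_mul, ← pow_add]
    _ ≤ (m + 3) ^ ((t + 2) * (ℓ + t + 1)) := Nat.pow_le_pow_right (by omega) (by nlinarith)

theorem two_mul_mul_rpow_le {c ε x : ℝ} {m : ℕ} (hmc : (m + 1) * c = 1) (hε : ε ≤ 1 / 2)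
    (hx : 0 ≤ x) : 2 * (ε * x ^ (1 - c)) ≤ (x ^ c) ^ m := by
  have hpow : x ^ (1 - c) = (x ^ c) ^ m := by
    rw [← Real.rpow_mul_natCast hx]
    congr 1
    linarith
  have : 0 ≤ x ^ (1 - c) := Real.rpow_nonneg hx _
  rw [← hpow]
  nlinarith

theorem mul_rpow_one_sub_mul_rpow {c ε x : ℝ} (hx : 0 < x) :
    ε * x ^ (1 - c) * x ^ c = ε * x := by
  rw [mul_assoc, ← Real.rpow_add hx, sub_add_cancel, Real.rpow_one]

theorem base_card_bounds {c d ε n b : ℝ} {m ℓ t : ℕ} (hmc : (m + 1) * c = 1) (hε : 0 < ε)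
    (hn : 0 < n) (hεd : (2 + 1 / c) ^ ((t + 2) * (ℓ + (t + 1))) * ε < d / 3) (hb : d * n ≤ b) :
    3 * (2 * (t + 1) * (2 * (m + 2)) ^ (ℓ + t)) * (ε * n) ≤ b ∧ 3 * (ε * n) < b := by
  have hc : 1 / c = m + 1 := (eq_one_div_of_mul_eq_one_left hmc).symm
  have hK : 2 + 1 / c = m + 3 := by rw [hc]; ring
  rw [hK, ← add_assoc] at hεd
  have hpow : (2 * (t + 1) * (2 * (m + 2)) ^ (ℓ + t) : ℝ) ≤ (m + 3) ^ ((t + 2) * (ℓ + t + 1)) :=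
    mod_cast two_mul_succ_mul_pow_le m ℓ t
  have hone : (1 : ℝ) ≤ (m + 3) ^ ((t + 2) * (ℓ + t + 1)) :=
    one_le_pow₀ (by linarith [(m.cast_nonneg : (0 : ℝ) ≤ m)])
  have hlt : 3 * (m + 3) ^ ((t + 2) * (ℓ + t + 1)) * (ε * n) < b := by
    nlinarith
  constructor
  · exact le_trans (by gcongr) hlt.le
  · nlinarith [mul_pos hε hn]

theorem sparseCoherent_of_degree_le {V : Type*} [Fintype V] {G : SimpleGraph V}
    [DecidableRel G.Adj] {q η : ℝ} (hdeg : ∀ v, (G.degree v : ℝ) ≤ η)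
    (hcoh : ¬∃ A B : Finset V, Disjoint A B ∧ (∀ a ∈ A, ∀ b ∈ B, ¬G.Adj a b) ∧ q ≤ #A ∧ η ≤ #B) :
    SparseCoherent G q η where
  card_covered_singleton_le v B := by
    refine le_trans (Nat.cast_le.2 ?_) (hdeg v)
    rw [← G.card_neighborFinset_eq_degree]
    exact card_le_card fun b hb ↦ by simpa [mem_covered] using (mem_covered.1 hb).2
  exists_adj Y X hYX hY hX := by
    by_contra! hanti
    exact hcoh ⟨Y, X, hYX, hanti, hY, hX⟩

end Parameters

/-- the pathfinder with possibly intersecting bases. -/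
theorem stmt_16 {V : Type} [Fintype V] [DecidableEq V] (G : SimpleGraph V) [DecidableRel G.Adj]
    (c : ℝ) (hc : 0 < c) (hci : ∃ m : ℕ, (m : ℝ) * c = 1)
    (ℓ s₁ t₁ : ℕ) (hℓ : 0 < ℓ) (hs : 0 < s₁) (ht : 0 < t₁)
    (d ε : ℝ) (hd : 0 < d) (hε0 : 0 < ε)
    (hεd : (2 + 1 / c) ^ ((t₁ + 1) * (ℓ + t₁)) * ε < d / 3)
    (hsparse : ∀ v : V, (G.degree v : ℝ) < ε * Fintype.card V)
    (hcoherent : ¬ ∃ A B : Finset V, Disjoint A B ∧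
      (∀ a ∈ A, ∀ b ∈ B, ¬ G.Adj a b) ∧
      ε * (Fintype.card V : ℝ) ^ (1 - c) ≤ (A.card : ℝ) ∧
      ε * Fintype.card V ≤ (B.card : ℝ))
    (L M : ℕ → Finset V) (hL : IsLevelling G L s₁) (hM : IsLevelling G M t₁)
    (a₁ a₂ : V) (ha₁ : L 0 = {a₁}) (ha₂ : M 0 = {a₂})
    (hB1 : d * Fintype.card V ≤ ((L s₁).card : ℝ))
    (hB2 : d * Fintype.card V ≤ ((M t₁).card : ℝ))
    (hint : ((Finset.range (s₁ + 1)).biUnion L) ∩ ((Finset.range (t₁ + 1)).biUnion M) =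
      (({a₁} : Finset V) ∩ {a₂}) ∪ (L s₁ ∩ M t₁))
    (hedge : ∀ x ∈ (Finset.range s₁).biUnion L,
      ∀ y ∈ (Finset.range (t₁ + 1)).biUnion M, G.Adj x y →
        x ∈ L (s₁ - 1) ∧ y ∈ M t₁) :
    ∃ p : G.Walk a₁ a₂, p.length = ℓ + s₁ + t₁ ∧
      (∀ h : a₁ = a₂, (p.copy rfl h.symm).IsCycle) ∧ (a₁ ≠ a₂ → p.IsPath) ∧
      (∀ x ∈ p.support,
        x ∈ ((Finset.range (s₁ + 1)).biUnion L) ∪ ((Finset.range (t₁ + 1)).biUnion M)) ∧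
      (∀ x ∈ p.support, ∀ y ∈ p.support, G.Adj x y → s(x, y) ∈ p.edges) := by
  obtain ⟨_ | m, hmc⟩ := hci
  · simp at hmc
  obtain ⟨s, rfl⟩ := Nat.exists_eq_add_one.2 hs
  obtain ⟨t, rfl⟩ := Nat.exists_eq_add_one.2 ht
  push_cast at hmc
  have hn : 1 ≤ (Fintype.card V : ℝ) := mod_cast Fintype.card_pos_iff.2 ⟨a₁⟩
  have hn0 := zero_lt_one.trans_le hn
  obtain ⟨hB2', hlt⟩ := base_card_bounds hmc hε0 hn0 hεd hB2
  have hε : ε ≤ 1 / 2 := by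
    have : (#(M (t + 1)) : ℝ) ≤ Fintype.card V := mod_cast card_le_univ _
    nlinarith
  have hG := sparseCoherent_of_degree_le (fun v ↦ (hsparse v).le) hcoherent
  have hne : a₁ ≠ a₂ := hM.apex_ne_apex ha₂ hG (by positivity) (by nlinarith)
    (subset_levelsBelow L hs (ha₁ ▸ mem_singleton_self a₁)) fun x hx y hy h ↦ (hedge x hx y hy h).2
  rw [singleton_inter_of_notMem (notMem_singleton.2 hne), empty_union] at hint
  obtain ⟨p, hp, hlen, hpW⟩ := hL.exists_isInducedPath hM ha₁ ha₂
    (hL.separated_hearts hM hint fun x hx y hy h ↦ (hedge x hx y hy h).2)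
    (hL.separated_base hint fun x hx y hy h ↦ (hedge x hx y hy h).1) (by positivity)
    (Real.one_le_rpow hn hc.le) (mul_rpow_one_sub_mul_rpow hn0)
    (two_mul_mul_rpow_le hmc hε hn0.le) hG hℓ
    (base_card_bounds hmc hε0 hn0 hεd hB1).1 hB2'
  exact ⟨p, hlen, fun h ↦ absurd h hne, fun _ ↦ hp.1, hpW, fun x hx y hy ↦ hp.2.mem_edges hx hy⟩
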